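/- arXiv:2104.13678 — 3 statements merged into one kernel-verified Lean document; each statement's English description precedes it below -/
import Mathlib

section
/- The linear map P on Mₙ(F) defined by P(e_ij) = -e_ij for i < j, P(e_ij) = 0 for i > j, and P(e_ii) = Σ_{k≥1, i+k≤n} e_{i+k,i+k}, is a Rota–Baxter operator of weight 1 on Mₙ(F) satisfying P + P* + id = tr(·)·E (i.e., P is 1-skew-symmetric with respect to the trace form). -/
/-- The linear map on `Mₙ(F)` with `P(e_ij) = -e_ij` for `i < j`,
`P(e_ij) = 0` for `i > j`, and `P(e_ii) = Σ_{k ≥ 1, i+k ≤ n} e_{i+k,i+k}`,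
written entrywise. -/
def Pop {F : Type*} [Field F] {n : ℕ}
    (x : Matrix (Fin n) (Fin n) F) : Matrix (Fin n) (Fin n) F :=
  Matrix.of fun i j =>
    if i < j then -x i j
    else if i = j then ∑ l ∈ Finset.univ.filter (fun l : Fin n => l < i), x l l
    else 0

/-!
For a map `P` put `Q = P + id`. Then `P x * y + x * P y + x * y = Q x * Q y - P x * P y`, so the
Rota–Baxter identity reads `P (Q x * Q y - P x * P y) = P x * P y`. Here `P x` is upper triangular
and `Q x` is lower triangular, hence so are the products `P x * P y` and `Q x * Q y`; this settles
the entries off the diagonal. On the diagonal both products multiply entrywise, and the entries of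
`P x` and `Q x` are the partial sums of the diagonal of `x` without and with its current term, so
the identity is a telescoping sum. The same sum over the whole diagonal gives
`tr (P x * y) + tr (x * P y) + tr (x * y) = tr x * tr y`, which says that the adjoint of `P` is
`y ↦ tr y • 1 - P y - y`.
-/

open Finset Matrix

theorem sum_partialSum_add_mul_sub {ι R : Type*} [LinearOrder ι] [NonUnitalNonAssocRing R]
    (s : Finset ι) (d e : ι → R) :
    ∑ l ∈ s, (((∑ m ∈ s with m < l, d m) + d l) * ((∑ m ∈ s with m < l, e m) + e l) -
      (∑ m ∈ s with m < l, d m) * ∑ m ∈ s with m < l, e m) = (∑ l ∈ s, d l) * ∑ l ∈ s, e l := by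
  induction s using Finset.induction_on_max with
  | empty => simp
  | insert a s lt_a ih =>
    have a_notMem : a ∉ s := fun ha => (lt_a a ha).false
    have filter_lt_a : (insert a s).filter (· < a) = s := by
      rw [filter_insert, if_neg (lt_irrefl a), filter_true_of_mem lt_a]
    have filter_lt_of_mem (l : ι) (hl : l ∈ s) :
        (insert a s).filter (· < l) = s.filter (· < l) := by
      rw [filter_insert, if_neg (lt_a l hl).not_gt]
    rw [sum_insert a_notMem, sum_insert a_notMem, sum_insert a_notMem, filter_lt_a]
    calc
      _ = ((∑ l ∈ s, d l) + d a) * ((∑ l ∈ s, e l) + e a) - (∑ l ∈ s, d l) * ∑ l ∈ s, e l +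
          (∑ l ∈ s, d l) * ∑ l ∈ s, e l :=
        congrArg _ <| (sum_congr rfl fun l hl => by rw [filter_lt_of_mem l hl]).trans ih
      _ = (d a + ∑ l ∈ s, d l) * (e a + ∑ l ∈ s, e l) := by
        rw [sub_add_cancel, add_comm (d a), add_comm (e a)]

theorem mul_apply_self_of_blockTriangular {ι α R : Type*} [Fintype ι] [LinearOrder α]
    [NonUnitalNonAssocSemiring R] {b : ι → α} (hb : b.Injective) {M N : Matrix ι ι R}
    (hM : M.BlockTriangular b) (hN : N.BlockTriangular b) (i : ι) :
    (M * N) i i = M i i * N i i := by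
  rw [mul_apply]
  refine Fintype.sum_eq_single i fun k hk => ?_
  rcases (hb.ne hk).lt_or_gt with hlt | hgt
  · rw [hM hlt, zero_mul]
  · rw [hN hgt, mul_zero]

/-- The operator `Pop` for matrices indexed by an arbitrary finite linear order with entries in an
additive commutative group: it negates the entries above the diagonal, kills those below it, and
replaces each diagonal entry by the sum of the diagonal entries strictly before it. -/
def triangularRotaBaxter {ι R : Type*} [Fintype ι] [LinearOrder ι] [AddCommGroup R]
    (x : Matrix ι ι R) : Matrix ι ι R :=
  of fun i j => if i < j then -x i j else if i = j then ∑ l with l < i, x l l else 0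

namespace triangularRotaBaxter

variable {ι R : Type*} [Fintype ι] [LinearOrder ι]

section AddCommGroup

variable [AddCommGroup R]

theorem apply_self (x : Matrix ι ι R) (i : ι) :
    triangularRotaBaxter x i i = ∑ l with l < i, x l l := by
  simp [triangularRotaBaxter]

theorem isUpperTriangular (x : Matrix ι ι R) : (triangularRotaBaxter x).IsUpperTriangular := by
  intro i j (hij : j < i)
  simp [triangularRotaBaxter, hij.not_gt, hij.ne']

theorem add_self_isLowerTriangular (x : Matrix ι ι R) :
    (triangularRotaBaxter x + x).IsLowerTriangular := by
  intro i j (hij : i < j)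
  simp [triangularRotaBaxter, hij]

theorem eq_of_isUpperTriangular_of_isLowerTriangular {w z : Matrix ι ι R}
    (hw : w.IsUpperTriangular) (hwz : (w + z).IsLowerTriangular)
    (hdiag : ∀ i, w i i = ∑ l with l < i, z l l) : w = triangularRotaBaxter z := by
  ext i j
  rcases lt_trichotomy i j with hij | rfl | hji
  · rw [eq_neg_of_add_eq_zero_left (hwz hij),
      eq_neg_of_add_eq_zero_left (add_self_isLowerTriangular z hij)]
  · rw [hdiag, apply_self]
  · rw [hw hji, isUpperTriangular z hji]

end AddCommGroup

section NonUnitalNonAssocRing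

variable [NonUnitalNonAssocRing R]

theorem mul_add_mul_add_mul_eq_sub (x y : Matrix ι ι R) :
    triangularRotaBaxter x * y + x * triangularRotaBaxter y + x * y =
      (triangularRotaBaxter x + x) * (triangularRotaBaxter y + y) -
        triangularRotaBaxter x * triangularRotaBaxter y := by
  rw [add_mul, mul_add, mul_add]
  abel

theorem mul_add_mul_add_mul_apply_self (x y : Matrix ι ι R) (i : ι) :
    (triangularRotaBaxter x * y + x * triangularRotaBaxter y + x * y) i i =
      ((∑ l with l < i, x l l) + x i i) * ((∑ l with l < i, y l l) + y i i) -
        (∑ l with l < i, x l l) * ∑ l with l < i, y l l := by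
  rw [mul_add_mul_add_mul_eq_sub, Matrix.sub_apply,
    mul_apply_self_of_blockTriangular OrderDual.toDual.injective (add_self_isLowerTriangular x)
      (add_self_isLowerTriangular y),
    mul_apply_self_of_blockTriangular Function.injective_id (isUpperTriangular x)
      (isUpperTriangular y)]
  simp only [Matrix.add_apply, apply_self]

theorem apply_mul_apply (x y : Matrix ι ι R) :
    triangularRotaBaxter x * triangularRotaBaxter y =
      triangularRotaBaxter
        (triangularRotaBaxter x * y + x * triangularRotaBaxter y + x * y) := by
  refine eq_of_isUpperTriangular_of_isLowerTriangular
    ((isUpperTriangular x).mul (isUpperTriangular y)) ?_ fun i => ?_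
  · rw [mul_add_mul_add_mul_eq_sub, add_sub_cancel]
    exact (add_self_isLowerTriangular x).mul (add_self_isLowerTriangular y)
  · have filter_filter_lt (l : ι) (hl : l ∈ univ.filter (· < i)) :
        (univ.filter (· < i)).filter (· < l) = univ.filter (· < l) := by
      ext m
      simpa using fun hm : m < l => hm.trans (mem_filter.mp hl).2
    rw [mul_apply_self_of_blockTriangular Function.injective_id (isUpperTriangular x)
      (isUpperTriangular y), apply_self, apply_self,
      ← sum_partialSum_add_mul_sub _ (fun l => x l l) fun l => y l l]
    refine sum_congr rfl fun l hl => ?_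
    rw [filter_filter_lt l hl, mul_add_mul_add_mul_apply_self]

theorem trace_mul_add_mul_add_mul (x y : Matrix ι ι R) :
    (triangularRotaBaxter x * y + x * triangularRotaBaxter y + x * y).trace =
      x.trace * y.trace := by
  simp only [trace, diag_apply, mul_add_mul_add_mul_apply_self]
  exact sum_partialSum_add_mul_sub univ (fun l => x l l) fun l => y l l

end NonUnitalNonAssocRing

theorem trace_mul_eq_trace_mul_adjoint [NonAssocRing R] (x y : Matrix ι ι R) :
    (triangularRotaBaxter x * y).trace =
      (x * (y.trace • (1 : Matrix ι ι R) - triangularRotaBaxter y - y)).trace := by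
  have trace_mul_smul_one : (x * (y.trace • (1 : Matrix ι ι R))).trace = x.trace * y.trace := by
    simp only [smul_one_eq_diagonal, trace, diag_apply, mul_diagonal, sum_mul]
  rw [mul_sub, mul_sub, trace_sub, trace_sub, trace_mul_smul_one, ← trace_mul_add_mul_add_mul,
    trace_add, trace_add]
  abel

end triangularRotaBaxter

theorem Pop_is_one_skew_rb_general {ι R : Type*} [Fintype ι] [LinearOrder ι] [NonAssocRing R] :
    (∀ x y : Matrix ι ι R,
        triangularRotaBaxter x * triangularRotaBaxter y =
          triangularRotaBaxter
            (triangularRotaBaxter x * y + x * triangularRotaBaxter y + x * y)) ∧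
    (∃ Ps : Matrix ι ι R → Matrix ι ι R,
        (∀ x y : Matrix ι ι R, (triangularRotaBaxter x * y).trace = (x * Ps y).trace) ∧
        (∀ x : Matrix ι ι R,
            triangularRotaBaxter x + Ps x + x = x.trace • (1 : Matrix ι ι R))) :=
  ⟨triangularRotaBaxter.apply_mul_apply,
    fun y => y.trace • (1 : Matrix ι ι R) - triangularRotaBaxter y - y,
    triangularRotaBaxter.trace_mul_eq_trace_mul_adjoint,
    fun x => by rw [add_assoc, sub_add_cancel, add_sub_cancel]⟩

/-- `Pop` is a Rota–Baxter operator of weight `1` on `Mₙ(F)` which is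
`1`-skew-symmetric with respect to the trace form: `P + P* + id = tr(·)·E`. -/
theorem Pop_is_one_skew_rb {F : Type*} [Field F] {n : ℕ} :
    (∀ x y : Matrix (Fin n) (Fin n) F,
        Pop x * Pop y = Pop (Pop x * y + x * Pop y + x * y)) ∧
    (∃ Ps : Matrix (Fin n) (Fin n) F → Matrix (Fin n) (Fin n) F,
        (∀ x y : Matrix (Fin n) (Fin n) F, (Pop x * y).trace = (x * Ps y).trace) ∧
        (∀ x : Matrix (Fin n) (Fin n) F,
            Pop x + Ps x + x = x.trace • (1 : Matrix (Fin n) (Fin n) F))) :=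
  Pop_is_one_skew_rb_general
end

section
/- The linear map P₁ on Mₙ(F) defined by P₁(e_ij) = Σ_{k≥1} e_{i+k,j+k} (sum over k with i+k, j+k ≤ n) for i ≥ j, and P₁(e_ij) = -Σ_{k≥0} e_{i-k,j-k} (sum over k with i-k, j-k ≥ 1) for i < j, is a Rota–Baxter operator of weight 1 on Mₙ(F) satisfying P₁ + P₁* + id = tr(·)·E. -/
/-- Extension of a matrix to a function `ℕ → ℕ → F` by zero. -/
def extM {F : Type*} [Zero F] {n : ℕ}
    (x : Matrix (Fin n) (Fin n) F) (i j : ℕ) : F :=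
  if h : i < n ∧ j < n then x ⟨i, h.1⟩ ⟨j, h.2⟩ else 0

/-- The linear map on `Mₙ(F)` with `P₁(e_ij) = Σ_{k ≥ 1} e_{i+k,j+k}` for `i ≥ j`
and `P₁(e_ij) = -Σ_{k ≥ 0} e_{i-k,j-k}` for `i < j` (sums over indices staying in
range), written entrywise. -/
def P1op {F : Type*} [Field F] {n : ℕ}
    (x : Matrix (Fin n) (Fin n) F) : Matrix (Fin n) (Fin n) F :=
  Matrix.of fun a b =>
    if (b : ℕ) ≤ (a : ℕ) then
      ∑ k ∈ Finset.Icc 1 (b : ℕ), extM x ((a : ℕ) - k) ((b : ℕ) - k)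
    else
      -∑ k ∈ Finset.range (n - (b : ℕ)), extM x ((a : ℕ) + k) ((b : ℕ) + k)

/-!
Put `w = P₁ x + x`. The definition of `P₁` says exactly that `P₁ x` is `w` pushed one step down the
diagonals: the first column of `P₁ x` vanishes, the last column of `w` vanishes above the corner,
and `(P₁ x)_{i+1,j+1} = w_{ij}`. Pairs `(w, u)` related in this way are closed under componentwise
products, and `u` is determined by `w - u`; since
`(P₁ x + x)(P₁ y + y) = P₁ x P₁ y + (P₁ x y + x P₁ y + x y)`, this is the Rota–Baxter identity.
For such a pair `tr w - tr u` is the last corner entry of `w`, which is multiplicative in `w`, so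
`tr (P₁ x y + x P₁ y + x y) = tr x tr y`, and this identifies the adjoint of `P₁`.
-/

/-- The relation "`u` is `w` shifted one step down its diagonals": the entries entering in the first
column of `u` are zero, and so are those leaving from the last column of `w`, apart from the corner.
The entries of the first row of `u` and of the last row of `w` outside these columns are free.
`P₁ x` is the unique `u` that is a shift of `u + x`. -/
structure IsDiagonalShift {R : Type*} [Zero R] {m : ℕ}
    (w u : Matrix (Fin (m + 1)) (Fin (m + 1)) R) : Prop where
  apply_zero : ∀ i, u i 0 = 0
  apply_last : ∀ i : Fin m, w i.castSucc (Fin.last m) = 0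
  apply_succ_succ : ∀ i j : Fin m, u i.succ j.succ = w i.castSucc j.castSucc

namespace IsDiagonalShift

variable {R : Type*} {m : ℕ}

theorem sub [AddGroup R] {w w' u u' : Matrix (Fin (m + 1)) (Fin (m + 1)) R}
    (h : IsDiagonalShift w u) (h' : IsDiagonalShift w' u') :
    IsDiagonalShift (w - w') (u - u') where
  apply_zero i := by simp [h.apply_zero, h'.apply_zero]
  apply_last i := by simp [h.apply_last, h'.apply_last]
  apply_succ_succ i j := by simp [h.apply_succ_succ, h'.apply_succ_succ]

theorem mul [NonUnitalNonAssocSemiring R] {w w' u u' : Matrix (Fin (m + 1)) (Fin (m + 1)) R}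
    (h : IsDiagonalShift w u) (h' : IsDiagonalShift w' u') :
    IsDiagonalShift (w * w') (u * u') where
  apply_zero i := by simp [Matrix.mul_apply, h'.apply_zero]
  apply_last i := by
    simp [Matrix.mul_apply, Fin.sum_univ_castSucc, h.apply_last, h'.apply_last]
  apply_succ_succ i j := by
    calc (u * u') i.succ j.succ
        = ∑ k : Fin m, u i.succ k.succ * u' k.succ j.succ := by
          simp [Matrix.mul_apply, Fin.sum_univ_succ, h.apply_zero]
      _ = ∑ k : Fin m, w i.castSucc k.castSucc * w' k.castSucc j.castSucc := by
          simp only [h.apply_succ_succ, h'.apply_succ_succ]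
      _ = (w * w') i.castSucc j.castSucc := by
          simp [Matrix.mul_apply, Fin.sum_univ_castSucc, h.apply_last]

theorem apply_eq_zero_of_le [Zero R] {d : Matrix (Fin (m + 1)) (Fin (m + 1)) R}
    (h : IsDiagonalShift d d) {i j : Fin (m + 1)} (hij : j ≤ i) : d i j = 0 := by
  induction j using Fin.induction generalizing i with
  | zero => exact h.apply_zero i
  | succ j ih =>
    obtain ⟨i, rfl⟩ := Fin.exists_succ_eq.2 (Fin.ne_zero_of_lt (j.succ_pos.trans_le hij))
    rw [h.apply_succ_succ]
    exact ih (Fin.succ_le_succ_iff.1 hij)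

theorem apply_eq_zero_of_lt [Zero R] {d : Matrix (Fin (m + 1)) (Fin (m + 1)) R}
    (h : IsDiagonalShift d d) {i j : Fin (m + 1)} (hij : i < j) : d i j = 0 := by
  obtain ⟨i, rfl⟩ := Fin.exists_castSucc_eq.2 (Fin.ne_last_of_lt hij)
  induction j using Fin.reverseInduction generalizing i with
  | last => exact h.apply_last i
  | cast j ih =>
    have hsucc : i.succ < j.succ := Fin.succ_lt_succ_iff.2 hij
    obtain ⟨k, hk⟩ := Fin.exists_castSucc_eq.2 (Fin.ne_last_of_lt hsucc)
    rw [← h.apply_succ_succ, ← hk]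
    exact ih k (hk ▸ hsucc)

theorem eq_zero_of_self [Zero R] {d : Matrix (Fin (m + 1)) (Fin (m + 1)) R}
    (h : IsDiagonalShift d d) : d = 0 := by
  ext i j
  exact (le_or_gt j i).elim h.apply_eq_zero_of_le h.apply_eq_zero_of_lt

theorem eq_of_add [AddCommGroup R] {x u v : Matrix (Fin (m + 1)) (Fin (m + 1)) R}
    (hu : IsDiagonalShift (u + x) u) (hv : IsDiagonalShift (v + x) v) : u = v := by
  have hsub := hu.sub hv
  rw [add_sub_add_right_eq_sub] at hsub
  exact sub_eq_zero.1 hsub.eq_zero_of_self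

theorem trace_eq_trace_add [AddCommMonoid R] {w u : Matrix (Fin (m + 1)) (Fin (m + 1)) R}
    (h : IsDiagonalShift w u) : w.trace = u.trace + w (Fin.last m) (Fin.last m) := by
  simp only [Matrix.trace, Matrix.diag_apply]
  rw [Fin.sum_univ_castSucc, Fin.sum_univ_succ (fun i => u i i), h.apply_zero, zero_add]
  simp only [h.apply_succ_succ]

theorem trace_eq_of_add [AddCommGroup R] {x u : Matrix (Fin (m + 1)) (Fin (m + 1)) R}
    (h : IsDiagonalShift (u + x) u) : x.trace = (u + x) (Fin.last m) (Fin.last m) := by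
  have htrace := h.trace_eq_trace_add
  rwa [Matrix.trace_add, add_right_inj] at htrace

theorem mul_apply_last_last [NonUnitalNonAssocSemiring R]
    {w w' u' : Matrix (Fin (m + 1)) (Fin (m + 1)) R} (h' : IsDiagonalShift w' u') :
    (w * w') (Fin.last m) (Fin.last m) =
      w (Fin.last m) (Fin.last m) * w' (Fin.last m) (Fin.last m) := by
  simp [Matrix.mul_apply, Fin.sum_univ_castSucc, h'.apply_last]

end IsDiagonalShift

theorem add_mul_add_eq_mul_add {R : Type*} [NonUnitalNonAssocSemiring R] (u v x y : R) :
    (u + x) * (v + y) = u * v + (u * y + x * v + x * y) := by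
  simp only [add_mul, mul_add]
  abel

theorem extM_val {R : Type*} [Zero R] {n : ℕ} (x : Matrix (Fin n) (Fin n) R) (i j : Fin n) :
    extM x i j = x i j := by
  simp [extM]

section P1op

variable {F : Type*} [Field F] {n m : ℕ}

theorem P1op_apply_of_le (x : Matrix (Fin n) (Fin n) F) {i j : Fin n} (hij : j ≤ i) :
    P1op x i j = ∑ k ∈ Finset.range j, extM x (i - (k + 1)) (j - (k + 1)) := by
  rw [P1op, Matrix.of_apply, if_pos (Fin.le_def.1 hij), ← Finset.Ico_add_one_right_eq_Icc,
    Finset.sum_Ico_eq_sum_range, Nat.add_sub_cancel]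
  simp only [add_comm 1]

theorem P1op_apply_of_lt (x : Matrix (Fin n) (Fin n) F) {i j : Fin n} (hij : i < j) :
    P1op x i j = -∑ k ∈ Finset.range (n - j), extM x (i + k) (j + k) := by
  rw [P1op, Matrix.of_apply, if_neg (not_le.2 (Fin.lt_def.1 hij))]

theorem P1op_apply_castSucc_last (x : Matrix (Fin (m + 1)) (Fin (m + 1)) F) (i : Fin m) :
    P1op x i.castSucc (Fin.last m) = -x i.castSucc (Fin.last m) := by
  rw [P1op_apply_of_lt x i.castSucc_lt_last, ← extM_val x]
  simp

theorem P1op_apply_succ_succ (x : Matrix (Fin (m + 1)) (Fin (m + 1)) F) (i j : Fin m) :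
    P1op x i.succ j.succ = P1op x i.castSucc j.castSucc + x i.castSucc j.castSucc := by
  rw [← extM_val x]
  rcases le_or_gt j i with hij | hij
  · rw [P1op_apply_of_le x (Fin.succ_le_succ_iff.2 hij),
      P1op_apply_of_le x (Fin.castSucc_le_castSucc_iff.2 hij), Fin.val_succ, Fin.val_succ,
      Finset.sum_range_succ']
    simp only [Nat.add_sub_add_right, Nat.sub_zero, Fin.val_castSucc]
  · have hlen : m + 1 - (j : ℕ) = m + 1 - (j + 1) + 1 := by omega
    rw [P1op_apply_of_lt x (Fin.succ_lt_succ_iff.2 hij),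
      P1op_apply_of_lt x (Fin.castSucc_lt_castSucc_iff.2 hij), Fin.val_succ, Fin.val_succ,
      Fin.val_castSucc, Fin.val_castSucc, hlen, Finset.sum_range_succ']
    simp [add_assoc, add_comm 1]

theorem isDiagonalShift_P1op (x : Matrix (Fin (m + 1)) (Fin (m + 1)) F) :
    IsDiagonalShift (P1op x + x) (P1op x) where
  apply_zero i := by simp [P1op_apply_of_le x (Fin.zero_le i)]
  apply_last i := by simp [P1op_apply_castSucc_last]
  apply_succ_succ i j := P1op_apply_succ_succ x i j

theorem isDiagonalShift_P1op_mul_P1op (x y : Matrix (Fin (m + 1)) (Fin (m + 1)) F) :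
    IsDiagonalShift (P1op x * P1op y + (P1op x * y + x * P1op y + x * y))
      (P1op x * P1op y) := by
  have hmul := (isDiagonalShift_P1op x).mul (isDiagonalShift_P1op y)
  rwa [add_mul_add_eq_mul_add] at hmul

theorem P1op_mul_P1op (x y : Matrix (Fin n) (Fin n) F) :
    P1op x * P1op y = P1op (P1op x * y + x * P1op y + x * y) := by
  cases n with
  | zero => exact Subsingleton.elim _ _
  | succ m => exact (isDiagonalShift_P1op_mul_P1op x y).eq_of_add (isDiagonalShift_P1op _)

theorem trace_P1op_mul_add_mul_P1op_add_mul (x y : Matrix (Fin n) (Fin n) F) :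
    (P1op x * y + x * P1op y + x * y).trace = x.trace * y.trace := by
  cases n with
  | zero => simp [Matrix.trace]
  | succ m =>
    rw [(isDiagonalShift_P1op_mul_P1op x y).trace_eq_of_add, ← add_mul_add_eq_mul_add,
      (isDiagonalShift_P1op y).mul_apply_last_last, ← (isDiagonalShift_P1op x).trace_eq_of_add,
      ← (isDiagonalShift_P1op y).trace_eq_of_add]

theorem trace_P1op_mul (x y : Matrix (Fin n) (Fin n) F) :
    (P1op x * y).trace = (x * (y.trace • 1 - P1op y - y)).trace := by
  have htrace := trace_P1op_mul_add_mul_P1op_add_mul x y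
  simp only [Matrix.trace_add] at htrace
  simp only [mul_sub, Matrix.trace_sub, Matrix.mul_smul, mul_one, Matrix.trace_smul, smul_eq_mul]
  linear_combination htrace

end P1op

/-- `P1op` is a Rota–Baxter operator of weight `1` on `Mₙ(F)` which is
`1`-skew-symmetric with respect to the trace form: `P₁ + P₁* + id = tr(·)·E`. -/
theorem P1op_is_one_skew_rb {F : Type*} [Field F] {n : ℕ} :
    (∀ x y : Matrix (Fin n) (Fin n) F,
        P1op x * P1op y = P1op (P1op x * y + x * P1op y + x * y)) ∧
    (∃ Ps : Matrix (Fin n) (Fin n) F → Matrix (Fin n) (Fin n) F,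
        (∀ x y : Matrix (Fin n) (Fin n) F, (P1op x * y).trace = (x * Ps y).trace) ∧
        (∀ x : Matrix (Fin n) (Fin n) F,
            P1op x + Ps x + x = x.trace • (1 : Matrix (Fin n) (Fin n) F))) := by
  refine ⟨P1op_mul_P1op, fun y => y.trace • 1 - P1op y - y, trace_P1op_mul, fun x => ?_⟩
  module
end

section
/- Let (V,⟦·,·⟧) be a finite-dimensional λ-double Lie algebra with λ ≠ 0, i.e., ⟦a,b⟧ + τ(⟦b,a⟧) = λ(a⊗b - b⊗a) and ⟦a,⟦b,c⟧⟧_L - τ₁₂(⟦b,⟦a,c⟧⟧_R) - ⟦⟦a,b⟧,c⟧_L = -λτ₁₂(b⊗⟦a,c⟧) for all a,b,c ∈ V. Extend the bracket to the free associative algebra A = F⟨e₁,…,eₙ⟩ via the Leibniz rules ⟦a,bc⟧ = (b⊗1)⟦a,c⟧ + ⟦a,b⟧(1⊗c) and ⟦ab,c⟧ = (1⊗a)⟦b,c⟧ + ⟦a,c⟧(b⊗1). Then {a,b} := μ(⟦a,b⟧) satisfies the left Leibniz/Jacobi identity {a,{b,c}} - {b,{a,c}} = {{a,b},c} for all a,b,c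 ∈ A. -/
open scoped TensorProduct

section Defs

variable (F A : Type*) [Field F] [Ring A] [Algebra F A]

/-- The permutation `τ₁₂` of the first two factors of `A ⊗ A ⊗ A`. -/
noncomputable def swap12 : A ⊗[F] (A ⊗[F] A) →ₗ[F] A ⊗[F] (A ⊗[F] A) :=
  (TensorProduct.assoc F A A A).toLinearMap ∘ₗ
    LinearMap.rTensor A (TensorProduct.comm F A A).toLinearMap ∘ₗ
      (TensorProduct.assoc F A A A).symm.toLinearMap

/-- The permutation `τ₂₃` of the last two factors of `A ⊗ A ⊗ A`. -/
noncomputable def swap23 : A ⊗[F] (A ⊗[F] A) →ₗ[F] A ⊗[F] (A ⊗[F] A) :=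
  LinearMap.lTensor A (TensorProduct.comm F A A).toLinearMap

variable {F A}

/-- `⟦a, -⟧_L : x ⊗ y ↦ ⟦a,x⟧ ⊗ y`. -/
noncomputable def extL (D : A →ₗ[F] A →ₗ[F] (A ⊗[F] A)) (a : A) :
    A ⊗[F] A →ₗ[F] A ⊗[F] (A ⊗[F] A) :=
  (TensorProduct.assoc F A A A).toLinearMap ∘ₗ LinearMap.rTensor A (D a)

/-- `⟦a, -⟧_R : x ⊗ y ↦ τ₁₂(x ⊗ ⟦a,y⟧)`. -/
noncomputable def extR (D : A →ₗ[F] A →ₗ[F] (A ⊗[F] A)) (a : A) :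
    A ⊗[F] A →ₗ[F] A ⊗[F] (A ⊗[F] A) :=
  swap12 F A ∘ₗ LinearMap.lTensor A (D a)

/-- `⟦-, c⟧_L : x ⊗ y ↦ τ₂₃(⟦x,c⟧ ⊗ y)`. -/
noncomputable def extLc (D : A →ₗ[F] A →ₗ[F] (A ⊗[F] A)) (c : A) :
    A ⊗[F] A →ₗ[F] A ⊗[F] (A ⊗[F] A) :=
  swap23 F A ∘ₗ (TensorProduct.assoc F A A A).toLinearMap ∘ₗ
    LinearMap.rTensor A (D.flip c)

end Defs

/-!
Let `δ` be the derivation of the free algebra into the outer bimodule `A ⊗ A` with `δ(eᵢ) = eᵢ ⊗ 1`,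
and replace `⟦a, c⟧` by `⟦a, c⟧ + λ ((1 ⊗ a) δ(c) - δ(c) (a ⊗ 1))`. The correction is killed by
multiplication, so the bracket `{·,·}` does not change. The corrected double bracket
satisfies both Leibniz rules, so its properties may be checked on generators:

* `⟦a, b⟧ + τ⟦b, a⟧` becomes `λ (a ⊗ b + b ⊗ a - ba ⊗ 1 - 1 ⊗ ab)` for all `a, b ∈ A`, so its
  contribution to the Jacobi identity of `{·,·}` vanishes;
* for a generator `c`, the double Jacobiator becomes a sum of twisted commutators of the form
  `a₂ m - m a₁` and `b₃ m - m b₂`, where the subscript is the tensor factor in which the element is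
  placed. Multiplication kills both.

This proves the Jacobi identity for generators `c`, hence in general, since both of its sides are
derivations in `c`.
-/

open Algebra.TensorProduct (includeLeft includeRight)

section TwistedDerivation

variable {R A B C : Type*} [CommRing R] [Ring A] [Algebra R A] [Ring B] [Algebra R B]
  [Ring C] [Algebra R C]

/-- The `(l, r)`-derivations `A → B`: derivations into the `A`-bimodule `B` on which `a` acts on the
left as multiplication by `l a` and on the right as multiplication by `r a`. -/
def twistedDer (l r : A →ₐ[R] B) : Submodule R (A →ₗ[R] B) where
  carrier := {d | ∀ a a', d (a * a') = l a * d a' + d a * r a'}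
  add_mem' hd he a a' := by
    simp only [LinearMap.add_apply, hd a a', he a a', mul_add, add_mul]
    abel
  zero_mem' := by simp
  smul_mem' k d hd a a' := by simp [hd a a']

/-- The twisted commutator `m ↦ a ↦ l a * m - m * r a`, sending `m` to its inner
`(l, r)`-derivation. -/
def twistedAd (l r : A →ₐ[R] B) : B →ₗ[R] A →ₗ[R] B :=
  (LinearMap.mul R B).flip.compl₂ l.toLinearMap - (LinearMap.mul R B).compl₂ r.toLinearMap

/-- Bilinear maps that are `(l₁, r₁)`-derivations in the first argument and
`(l₂, r₂)`-derivations in the second. -/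
def twistedBider (l₁ r₁ l₂ r₂ : A →ₐ[R] B) : Submodule R (A →ₗ[R] A →ₗ[R] B) where
  carrier := {β | (∀ b, β.flip b ∈ twistedDer l₁ r₁) ∧ ∀ a, β a ∈ twistedDer l₂ r₂}
  add_mem' hβ hγ := ⟨fun b => add_mem (hβ.1 b) (hγ.1 b), fun a => add_mem (hβ.2 a) (hγ.2 a)⟩
  zero_mem' := ⟨fun _ => zero_mem _, fun _ => zero_mem _⟩
  smul_mem' k _ hβ :=
    ⟨fun b => Submodule.smul_mem _ k (hβ.1 b), fun a => Submodule.smul_mem _ k (hβ.2 a)⟩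

variable {l r l₁ r₁ l₂ r₂ : A →ₐ[R] B}

theorem map_one_of_mem_twistedDer {d : A →ₗ[R] B} (hd : d ∈ twistedDer l r) : d 1 = 0 := by
  simpa using hd 1 1

theorem algHom_comp_mem_twistedDer {d : A →ₗ[R] B} (hd : d ∈ twistedDer l r) (f : B →ₐ[R] C) :
    f.toLinearMap ∘ₗ d ∈ twistedDer (f.comp l) (f.comp r) := fun a a' => by
  simp [hd a a']

theorem add_neg_smul_mem_twistedDer {d e : A →ₗ[R] B} {k : R} {s : A → A → B}
    (hd : ∀ a a', d (a * a') = l a * d a' + d a * r a' - k • s a a')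
    (he : ∀ a a', e (a * a') = l a * e a' + e a * r a' - s a a') :
    d + (-k) • e ∈ twistedDer l r := fun a a' => by
  simp only [LinearMap.add_apply, LinearMap.smul_apply, hd, he, mul_add, add_mul, mul_smul_comm,
    smul_mul_assoc]
  module

theorem commutator_mem_twistedDer_id {d e : A →ₗ[R] A}
    (hd : d ∈ twistedDer (AlgHom.id R A) (AlgHom.id R A))
    (he : e ∈ twistedDer (AlgHom.id R A) (AlgHom.id R A)) :
    d ∘ₗ e - e ∘ₗ d ∈ twistedDer (AlgHom.id R A) (AlgHom.id R A) := fun a a' => by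
  have hd' : ∀ x y, d (x * y) = x * d y + d x * y := hd
  have he' : ∀ x y, e (x * y) = x * e y + e x * y := he
  simp only [LinearMap.sub_apply, LinearMap.comp_apply, hd', he', map_add, AlgHom.id_apply,
    mul_sub, sub_mul]
  abel

theorem mem_twistedDer_of_tmul {A' : Type*} [Ring A'] [Algebra R A'] {l r : A ⊗[R] A' →ₐ[R] B}
    {d : A ⊗[R] A' →ₗ[R] B}
    (hd : ∀ x y x' y', d ((x * x') ⊗ₜ (y * y')) =
      l (x ⊗ₜ y) * d (x' ⊗ₜ y') + d (x ⊗ₜ y) * r (x' ⊗ₜ y')) :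
    d ∈ twistedDer l r := by
  have h : (LinearMap.mul R (A ⊗[R] A')).compr₂ d =
      (LinearMap.mul R B).compl₁₂ l.toLinearMap d +
        (LinearMap.mul R B).compl₁₂ d r.toLinearMap := by
    ext x y x' y'
    simp [hd]
  exact fun s t => LinearMap.congr_fun₂ h s t

@[simp]
theorem twistedAd_apply (l r : A →ₐ[R] B) (m : B) (a : A) :
    twistedAd l r m a = l a * m - m * r a := by
  simp [twistedAd]

theorem twistedAd_mem_twistedDer (l r : A →ₐ[R] B) (m : B) :
    twistedAd l r m ∈ twistedDer l r := fun a a' => by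
  simp only [twistedAd_apply, map_mul, mul_sub, sub_mul, mul_assoc]
  abel

theorem twistedAd_comp_flip_mem_twistedBider {δ : A →ₗ[R] B} (hδ : δ ∈ twistedDer l₂ r₂)
    (hl : ∀ a b, Commute (l₁ a) (l₂ b)) (hr : ∀ a b, Commute (r₁ a) (r₂ b)) :
    (twistedAd l₁ r₁ ∘ₗ δ).flip ∈ twistedBider l₁ r₁ l₂ r₂ := by
  refine ⟨fun b => twistedAd_mem_twistedDer l₁ r₁ (δ b), fun a b b' => ?_⟩
  simp only [LinearMap.flip_apply, LinearMap.comp_apply, twistedAd_apply, hδ b b', mul_add,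
    add_mul, mul_sub, sub_mul, mul_assoc, (hr a b').eq, (hl a b).left_comm]
  abel

theorem flip_mem_twistedBider {β : A →ₗ[R] A →ₗ[R] B} (hβ : β ∈ twistedBider l₁ r₁ l₂ r₂) :
    β.flip ∈ twistedBider l₂ r₂ l₁ r₁ :=
  ⟨hβ.2, hβ.1⟩

theorem add_neg_smul_mem_twistedBider {β γ : A →ₗ[R] A →ₗ[R] B} {k : R} {s : A → A → A → B}
    (hβ_left : ∀ a a' b, β (a * a') b = l₁ a * β a' b + β a b * r₁ a' - k • s a a' b)
    (hβ_right : ∀ a, β a ∈ twistedDer l₂ r₂)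
    (hγ_left : ∀ a a' b, γ (a * a') b = l₁ a * γ a' b + γ a b * r₁ a' - s a a' b)
    (hγ_right : ∀ a, γ a ∈ twistedDer l₂ r₂) :
    β + (-k) • γ ∈ twistedBider l₁ r₁ l₂ r₂ :=
  ⟨fun b => add_neg_smul_mem_twistedDer (d := β.flip b) (e := γ.flip b) (hβ_left · · b)
    (hγ_left · · b), fun a => add_mem (hβ_right a) (Submodule.smul_mem _ _ (hγ_right a))⟩

theorem compr₂_algHom_mem_twistedBider {β : A →ₗ[R] A →ₗ[R] B}
    (hβ : β ∈ twistedBider l₁ r₁ l₂ r₂) (f : B →ₐ[R] C) :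
    β.compr₂ f.toLinearMap ∈ twistedBider (f.comp l₁) (f.comp r₁) (f.comp l₂) (f.comp r₂) :=
  ⟨fun b => algHom_comp_mem_twistedDer (hβ.1 b) f, fun a => algHom_comp_mem_twistedDer (hβ.2 a) f⟩

end TwistedDerivation

section FreeAlgebra

variable {R X B : Type*} [CommRing R] [Ring B] [Algebra R B]
  {l r l₁ r₁ l₂ r₂ : FreeAlgebra R X →ₐ[R] B}

theorem twistedDer_freeAlgebra_ext {d e : FreeAlgebra R X →ₗ[R] B} (hd : d ∈ twistedDer l r)
    (he : e ∈ twistedDer l r) (h : ∀ x, d (FreeAlgebra.ι R x) = e (FreeAlgebra.ι R x)) :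
    d = e := by
  ext a
  induction a using FreeAlgebra.induction with
  | grade0 k =>
    simp [Algebra.algebraMap_eq_smul_one, map_one_of_mem_twistedDer hd,
      map_one_of_mem_twistedDer he]
  | grade1 x => exact h x
  | mul a b ha hb => rw [hd a b, he a b, ha, hb]
  | add a b ha hb => rw [map_add, map_add, ha, hb]

theorem twistedBider_freeAlgebra_ext {β γ : FreeAlgebra R X →ₗ[R] FreeAlgebra R X →ₗ[R] B}
    (hβ : β ∈ twistedBider l₁ r₁ l₂ r₂) (hγ : γ ∈ twistedBider l₁ r₁ l₂ r₂)
    (h : ∀ x y, β (FreeAlgebra.ι R x) (FreeAlgebra.ι R y) =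
      γ (FreeAlgebra.ι R x) (FreeAlgebra.ι R y)) : β = γ := by
  have h_left (b) : β.flip b = γ.flip b := by
    refine twistedDer_freeAlgebra_ext (hβ.1 b) (hγ.1 b) fun x => ?_
    exact LinearMap.congr_fun (twistedDer_freeAlgebra_ext (hβ.2 _) (hγ.2 _) (h x)) b
  exact LinearMap.ext₂ fun a b => LinearMap.congr_fun (h_left b) a

-- The upper right entry of a homomorphism into upper triangular matrices with diagonal `(l, r)`
-- is an `(l, r)`-derivation.
theorem exists_mem_twistedDer_freeAlgebra (l r : FreeAlgebra R X →ₐ[R] B) (f : X → B) :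
    ∃ d ∈ twistedDer l r, ∀ x, d (FreeAlgebra.ι R x) = f x := by
  let φ : FreeAlgebra R X →ₐ[R] Matrix (Fin 2) (Fin 2) B :=
    FreeAlgebra.lift R fun x => !![l (FreeAlgebra.ι R x), f x; 0, r (FreeAlgebra.ι R x)]
  have φ_diag (a) : φ a 0 0 = l a ∧ φ a 1 0 = 0 ∧ φ a 1 1 = r a := by
    induction a using FreeAlgebra.induction with
    | grade0 k => simp [Matrix.algebraMap_matrix_apply]
    | grade1 x => simp [φ]
    | mul a b ha hb => simp [Matrix.mul_apply, Fin.sum_univ_two, ha, hb]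
    | add a b ha hb => simp [ha, hb]
  refine ⟨Matrix.entryLinearMap R B 0 1 ∘ₗ φ.toLinearMap, fun a b => ?_, fun x => by simp [φ]⟩
  simp [Matrix.mul_apply, Fin.sum_univ_two, φ_diag]

theorem exists_eq_twistedAd_add_twistedAd
    {β : FreeAlgebra R X →ₗ[R] FreeAlgebra R X →ₗ[R] B} (hβ : β ∈ twistedBider l₁ r₁ l₂ r₂)
    (hl : ∀ a b, Commute (l₁ a) (l₂ b)) (hr : ∀ a b, Commute (r₁ a) (r₂ b)) (p q : X → B)
    (hβι : ∀ x y, β (FreeAlgebra.ι R x) (FreeAlgebra.ι R y) =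
      twistedAd l₁ r₁ (p y) (FreeAlgebra.ι R x) + twistedAd l₂ r₂ (q x) (FreeAlgebra.ι R y))
    (a b : FreeAlgebra R X) :
    ∃ s t, β a b = twistedAd l₁ r₁ s a + twistedAd l₂ r₂ t b := by
  obtain ⟨P, hP, hPι⟩ := exists_mem_twistedDer_freeAlgebra l₂ r₂ p
  obtain ⟨Q, hQ, hQι⟩ := exists_mem_twistedDer_freeAlgebra l₁ r₁ q
  have hP_mem := twistedAd_comp_flip_mem_twistedBider hP hl hr
  have hQ_mem := flip_mem_twistedBider <| twistedAd_comp_flip_mem_twistedBider hQ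
    (fun a b => (hl b a).symm) (fun a b => (hr b a).symm)
  have h_eq := twistedBider_freeAlgebra_ext hβ (add_mem hP_mem hQ_mem) fun x y => by
    simp [hβι, hPι, hQι]
  exact ⟨P b, Q a, LinearMap.congr_fun₂ h_eq a b⟩

end FreeAlgebra

section Legs

variable {R A : Type*} [CommRing R] [Ring A] [Algebra R A]

/-- The embedding `a ↦ a ⊗ 1`. -/
noncomputable abbrev inL : A →ₐ[R] A ⊗[R] A := includeLeft

/-- The embedding `a ↦ 1 ⊗ a`. -/
noncomputable abbrev inR : A →ₐ[R] A ⊗[R] A := includeRight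

/-- The embedding `a ↦ a ⊗ 1 ⊗ 1`. -/
noncomputable def leg1 : A →ₐ[R] A ⊗[R] (A ⊗[R] A) := includeLeft

/-- The embedding `a ↦ 1 ⊗ a ⊗ 1`. -/
noncomputable def leg2 : A →ₐ[R] A ⊗[R] (A ⊗[R] A) := includeRight.comp inL

/-- The embedding `a ↦ 1 ⊗ 1 ⊗ a`. -/
noncomputable def leg3 : A →ₐ[R] A ⊗[R] (A ⊗[R] A) := includeRight.comp inR

/-- The embedding `x ⊗ y ↦ x ⊗ y ⊗ 1`. -/
noncomputable def legs12 : A ⊗[R] A →ₐ[R] A ⊗[R] (A ⊗[R] A) :=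
  Algebra.TensorProduct.map (AlgHom.id R A) includeLeft

/-- The embedding `x ⊗ y ↦ x ⊗ 1 ⊗ y`. -/
noncomputable def legs13 : A ⊗[R] A →ₐ[R] A ⊗[R] (A ⊗[R] A) :=
  Algebra.TensorProduct.map (AlgHom.id R A) includeRight

/-- The embedding `x ⊗ y ↦ 1 ⊗ x ⊗ y`. -/
noncomputable def legs23 : A ⊗[R] A →ₐ[R] A ⊗[R] (A ⊗[R] A) := includeRight

/-- The swap `τ` of the two factors of `A ⊗ A`, as an algebra homomorphism. -/
noncomputable def swap : A ⊗[R] A →ₐ[R] A ⊗[R] A := Algebra.TensorProduct.comm R A A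

/-- The multiplication `x ⊗ y ⊗ z ↦ xyz`. -/
noncomputable def mul₃ : A ⊗[R] (A ⊗[R] A) →ₗ[R] A :=
  LinearMap.mul' R A ∘ₗ (LinearMap.mul' R A).lTensor A

@[simp]
theorem leg1_apply (a : A) : leg1 a = a ⊗ₜ[R] (1 ⊗ₜ[R] (1 : A)) := rfl

@[simp]
theorem leg2_apply (a : A) : leg2 a = (1 : A) ⊗ₜ[R] (a ⊗ₜ[R] (1 : A)) := rfl

@[simp]
theorem leg3_apply (a : A) : leg3 a = (1 : A) ⊗ₜ[R] ((1 : A) ⊗ₜ[R] a) := rfl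

@[simp]
theorem legs12_tmul (x y : A) : legs12 (x ⊗ₜ[R] y) = x ⊗ₜ (y ⊗ₜ 1) := rfl

@[simp]
theorem legs13_tmul (x y : A) : legs13 (x ⊗ₜ[R] y) = x ⊗ₜ (1 ⊗ₜ y) := rfl

@[simp]
theorem legs23_apply (t : A ⊗[R] A) : legs23 t = 1 ⊗ₜ t := rfl

@[simp]
theorem swap_tmul (x y : A) : swap (x ⊗ₜ[R] y) = y ⊗ₜ x := rfl

@[simp]
theorem mul₃_tmul (x : A) (t : A ⊗[R] A) : mul₃ (x ⊗ₜ t) = x * LinearMap.mul' R A t := by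
  simp [mul₃]

theorem commute_legs12_leg3 (t : A ⊗[R] A) (a : A) : Commute (legs12 t) (leg3 a) := by
  induction t with
  | zero => simp
  | add s t hs ht => rw [map_add]; exact hs.add_left ht
  | tmul x y => simp [Commute, SemiconjBy]

theorem commute_legs13_leg2 (t : A ⊗[R] A) (a : A) : Commute (legs13 t) (leg2 a) := by
  induction t with
  | zero => simp
  | add s t hs ht => rw [map_add]; exact hs.add_left ht
  | tmul x y => simp [Commute, SemiconjBy]

theorem commute_leg1_legs23 (a : A) (t : A ⊗[R] A) : Commute (leg1 a) (legs23 t) := by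
  simp [Commute, SemiconjBy, ← Algebra.TensorProduct.one_def]

theorem assoc_tmul_eq (t : A ⊗[R] A) (z : A) :
    TensorProduct.assoc R A A A (t ⊗ₜ z) = legs12 t * leg3 z := by
  induction t with
  | zero => simp
  | add s t hs ht => rw [TensorProduct.add_tmul, map_add, map_add, add_mul, hs, ht]
  | tmul x y => simp

theorem lTensor_tmul_eq (d : A →ₗ[R] A ⊗[R] A) (x y : A) :
    d.lTensor A (x ⊗ₜ y) = leg1 x * legs23 (d y) := by
  simp [← Algebra.TensorProduct.one_def]

theorem lTensor_mem_twistedDer {d : A →ₗ[R] A ⊗[R] A}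
    (hd : d ∈ twistedDer inL inR) :
    d.lTensor A ∈ twistedDer legs12 legs13 := by
  refine mem_twistedDer_of_tmul fun x y x' y' => ?_
  have h_legs12 : legs12 (x ⊗ₜ[R] y) = leg1 x * legs23 (inL y) := by simp
  have h_legs13 : legs13 (x' ⊗ₜ[R] y') = leg1 x' * legs23 (inR y') := by simp
  simp only [lTensor_tmul_eq, hd y y', h_legs12, h_legs13, map_add, map_mul, mul_add, mul_assoc,
    (commute_leg1_legs23 (R := R) x' _).left_comm]

theorem mul'_inL_mul (a : A) (t : A ⊗[R] A) :
    LinearMap.mul' R A (inL a * t) = a * LinearMap.mul' R A t := by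
  induction t with
  | zero => simp
  | add s t hs ht => simp only [mul_add, map_add, hs, ht]
  | tmul x y => simp [mul_assoc]

theorem mul'_mul_inR (t : A ⊗[R] A) (a : A) :
    LinearMap.mul' R A (t * inR a) = LinearMap.mul' R A t * a := by
  induction t with
  | zero => simp
  | add s t hs ht => simp only [add_mul, map_add, hs, ht]
  | tmul x y => simp [mul_assoc]

theorem mul'_inR_mul (a : A) (t : A ⊗[R] A) :
    LinearMap.mul' R A (inR a * t) = LinearMap.mul' R A (t * inL a) := by
  induction t with
  | zero => simp
  | add s t hs ht => simp only [mul_add, add_mul, map_add, hs, ht]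
  | tmul x y => simp [mul_assoc]

theorem mul₃_legs12_mul_leg3 (t : A ⊗[R] A) (z : A) :
    mul₃ (legs12 t * leg3 z) = LinearMap.mul' R A t * z := by
  induction t with
  | zero => simp
  | add s t hs ht => simp only [add_mul, map_add, hs, ht]
  | tmul x y => simp [mul_assoc]

theorem mul₃_legs13_mul_leg2 (t : A ⊗[R] A) (z : A) :
    mul₃ (legs13 t * leg2 z) = LinearMap.mul' R A (t * inL z) := by
  induction t with
  | zero => simp
  | add s t hs ht => simp only [add_mul, map_add, hs, ht]
  | tmul x y => simp [mul_assoc]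

theorem mul₃_twistedAd_leg2_leg1 (t : A ⊗[R] (A ⊗[R] A)) (a : A) :
    mul₃ (twistedAd leg2 leg1 t a) = 0 := by
  have h : mul₃ (R := R) (A := A) ∘ₗ (twistedAd leg2 leg1).flip a = 0 := by
    ext x y z
    simp [mul_assoc]
  exact LinearMap.congr_fun h t

theorem mul₃_twistedAd_leg3_leg2 (t : A ⊗[R] (A ⊗[R] A)) (a : A) :
    mul₃ (twistedAd leg3 leg2 t a) = 0 := by
  have h : mul₃ (R := R) (A := A) ∘ₗ (twistedAd leg3 leg2).flip a = 0 := by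
    ext x y z
    simp [mul_assoc]
  exact LinearMap.congr_fun h t

end Legs

section Extensions

variable {F A : Type*} [Field F] [Ring A] [Algebra F A]

theorem swap23_assoc_tmul_eq (t : A ⊗[F] A) (z : A) :
    swap23 F A (TensorProduct.assoc F A A A (t ⊗ₜ z)) = legs13 t * leg2 z := by
  induction t with
  | zero => simp
  | add s t hs ht => rw [TensorProduct.add_tmul, map_add, map_add, map_add, add_mul, hs, ht]
  | tmul x y => simp [swap23]

variable (D : A →ₗ[F] A →ₗ[F] A ⊗[F] A)

theorem extL_tmul (a x y : A) : extL D a (x ⊗ₜ y) = legs12 (D a x) * leg3 y :=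
  assoc_tmul_eq (D a x) y

theorem extLc_tmul (c x y : A) : extLc D c (x ⊗ₜ y) = legs13 (D x c) * leg2 y :=
  swap23_assoc_tmul_eq (D x c) y

theorem swap12_extR (a : A) (t : A ⊗[F] A) :
    swap12 F A (extR D a t) = (D a).lTensor A t := by
  have h : swap12 F A ∘ₗ swap12 F A = LinearMap.id := by
    ext x y z
    simp [swap12]
  exact LinearMap.congr_fun h _

theorem swap12_tmul_eq (b : A) (t : A ⊗[F] A) :
    swap12 F A (b ⊗ₜ t) = legs13 t * leg2 b := by
  induction t with
  | zero => simp
  | add s t hs ht => rw [TensorProduct.tmul_add, map_add, map_add, add_mul, hs, ht]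
  | tmul x y => simp [swap12]

variable {D} in
theorem extL_mem_twistedDer {a : A} (hD : D a ∈ twistedDer inL inR) :
    extL D a ∈ twistedDer legs13 legs23 := by
  refine mem_twistedDer_of_tmul fun x y x' y' => ?_
  have h_legs13 : legs13 (x ⊗ₜ[F] y) = legs12 (inL x) * leg3 y := by simp
  have h_legs23 : legs23 (x' ⊗ₜ[F] y') = legs12 (inR x') * leg3 y' := by simp
  simp only [extL_tmul, hD x x', h_legs13, h_legs23, map_add, map_mul, add_mul, mul_assoc,
    ← (commute_legs12_leg3 (R := F) _ y).left_comm]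

variable {D} in
theorem extLc_mem_twistedDer {c : A} (hD : D.flip c ∈ twistedDer inR inL) :
    extLc D c ∈ twistedDer (legs23.comp swap) legs12 := by
  refine mem_twistedDer_of_tmul fun x y x' y' => ?_
  have h_swap : (legs23.comp swap) (x ⊗ₜ[F] y) = legs13 (inR x) * leg2 y := by simp
  have h_legs12 : legs12 (x' ⊗ₜ[F] y') = legs13 (inL x') * leg2 y' := by simp
  have hD' : D (x * x') c = inR x * D x' c + D x c * inL x' := hD x x'
  simp only [extLc_tmul, hD', h_swap, h_legs12, map_add, map_mul, add_mul, mul_assoc,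
    ← (commute_legs13_leg2 (R := F) _ y).left_comm]

end Extensions

section Jacobiator

variable {F A : Type*} [Field F] [Ring A] [Algebra F A] {D : A →ₗ[F] A →ₗ[F] A ⊗[F] A}

/-- The bracket `{a, b} = μ(⟦a, b⟧)` of a double bracket `D = ⟦·,·⟧`. -/
noncomputable def bracket (D : A →ₗ[F] A →ₗ[F] A ⊗[F] A) : A →ₗ[F] A →ₗ[F] A :=
  D.compr₂ (LinearMap.mul' F A)

/-- The failure `⟦a, b⟧ + τ(⟦b, a⟧)` of a double bracket to be skew-symmetric. -/
noncomputable def skewDefect (D : A →ₗ[F] A →ₗ[F] A ⊗[F] A) : A →ₗ[F] A →ₗ[F] A ⊗[F] A :=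
  D + D.flip.compr₂ swap.toLinearMap

/-- The double Jacobiator
`⟦a, ⟦b, c⟧⟧_L - τ₁₂(⟦b, ⟦a, c⟧⟧_R) - ⟦⟦a, b⟧, c⟧_L` as a bilinear map in `a` and `b`; since
`τ₁₂` is an involution, its middle term is `x ⊗ y ↦ x ⊗ ⟦b, y⟧` applied to `⟦a, c⟧`. -/
noncomputable def doubleJacobiator (D : A →ₗ[F] A →ₗ[F] A ⊗[F] A) (c : A) :
    A →ₗ[F] A →ₗ[F] A ⊗[F] (A ⊗[F] A) :=
  LinearMap.mk₂ F (fun a b => extL D a (D b c) - (D b).lTensor A (D a c) - extLc D c (D a b))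
    (fun a a' b => by
      simp only [extL, map_add, LinearMap.rTensor_add, LinearMap.comp_add, LinearMap.add_apply]
      abel)
    (fun k a b => by simp [extL, LinearMap.rTensor_smul, smul_sub])
    (fun a b b' => by
      simp only [map_add, LinearMap.lTensor_add, LinearMap.add_apply]
      abel)
    (fun k a b => by simp [LinearMap.lTensor_smul, smul_sub])

theorem skewDefect_apply (a b : A) : skewDefect D a b = D a b + swap (D b a) := rfl

theorem doubleJacobiator_apply (a b c : A) : doubleJacobiator D c a b =
    extL D a (D b c) - (D b).lTensor A (D a c) - extLc D c (D a b) := rfl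

theorem skewDefect_mem_twistedBider (hD : D ∈ twistedBider inR inL inL inR) :
    skewDefect D ∈ twistedBider inR inL inL inR := by
  have h_swap_inL : swap.comp inL = (inR : A →ₐ[F] A ⊗[F] A) := by ext; simp
  have h_swap_inR : swap.comp inR = (inL : A →ₐ[F] A ⊗[F] A) := by ext; simp
  refine add_mem hD ?_
  simpa only [h_swap_inL, h_swap_inR] using
    compr₂_algHom_mem_twistedBider (flip_mem_twistedBider hD) swap

theorem bracket_mem_twistedDer_id (hD : D ∈ twistedBider inR inL inL inR) (a : A) :
    bracket D a ∈ twistedDer (AlgHom.id F A) (AlgHom.id F A) := fun b c => by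
  simp only [bracket, LinearMap.compr₂_apply, hD.2 a b c, map_add, mul'_inL_mul, mul'_mul_inR,
    AlgHom.id_apply]

theorem bracket_mul'_right (hD : D ∈ twistedBider inR inL inL inR) (a : A) (t : A ⊗[F] A) :
    bracket D a (LinearMap.mul' F A t) = mul₃ (extL D a t) + mul₃ ((D a).lTensor A t) := by
  induction t with
  | zero => simp
  | add s t hs ht => simp only [map_add, hs, ht]; abel
  | tmul x y =>
    rw [LinearMap.mul'_apply, bracket_mem_twistedDer_id hD a x y, extL_tmul, mul₃_legs12_mul_leg3,
      LinearMap.lTensor_tmul, mul₃_tmul, add_comm]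
    rfl

theorem mul₃_extLc_tmul (c x y : A) :
    mul₃ (extLc D c (x ⊗ₜ y)) = LinearMap.mul' F A (D x c * inL y) := by
  rw [extLc_tmul, mul₃_legs13_mul_leg2]

theorem bracket_mul_left (hD : D ∈ twistedBider inR inL inL inR) (a b c : A) :
    bracket D (a * b) c = mul₃ (extLc D c (a ⊗ₜ b)) + mul₃ (extLc D c (b ⊗ₜ a)) := by
  have h_leibniz : D (a * b) c = inR a * D b c + D a c * inL b := hD.1 c a b
  rw [bracket, LinearMap.compr₂_apply, h_leibniz, map_add, mul'_inR_mul, mul₃_extLc_tmul,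
    mul₃_extLc_tmul, add_comm]

theorem bracket_mul'_left (hD : D ∈ twistedBider inR inL inL inR) (c : A) (t : A ⊗[F] A) :
    bracket D (LinearMap.mul' F A t) c = mul₃ (extLc D c t) + mul₃ (extLc D c (swap t)) := by
  induction t with
  | zero => simp
  | add s t hs ht => simp only [map_add, LinearMap.add_apply, hs, ht]; abel
  | tmul x y => rw [LinearMap.mul'_apply, bracket_mul_left hD, swap_tmul]

theorem bracket_jacobi_defect (hD : D ∈ twistedBider inR inL inL inR) (a b c : A) :
    bracket D a (bracket D b c) - bracket D b (bracket D a c) - bracket D (bracket D a b) c =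
      mul₃ (doubleJacobiator D c a b) - mul₃ (doubleJacobiator D c b a)
        - mul₃ (extLc D c (skewDefect D b a)) := by
  have h (x y) : bracket D x y = LinearMap.mul' F A (D x y) := rfl
  rw [h b c, h a c, h a b, bracket_mul'_right hD, bracket_mul'_right hD, bracket_mul'_left hD]
  simp only [doubleJacobiator_apply, skewDefect_apply, map_sub, map_add]
  abel

theorem extL_mul_left (hD : D ∈ twistedBider inR inL inL inR) (a a' : A) (t : A ⊗[F] A) :
    extL D (a * a') t = leg2 a * extL D a' t + extL D a t * leg1 a' := by
  induction t with
  | zero => simp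
  | add s t hs ht => simp only [map_add, mul_add, add_mul, hs, ht]; abel
  | tmul x y =>
    have h_leibniz : D (a * a') x = inR a * D a' x + D a x * inL a' := hD.1 x a a'
    have h_comm : leg1 a' * leg3 y = leg3 y * (leg1 a' : A ⊗[F] (A ⊗[F] A)) := by simp
    have h_leg1 : legs12 (inL a') = (leg1 a' : A ⊗[F] (A ⊗[F] A)) := rfl
    have h_leg2 : legs12 (inR a) = (leg2 a : A ⊗[F] (A ⊗[F] A)) := rfl
    simp only [extL_tmul, h_leibniz, map_add, map_mul, add_mul, mul_assoc, h_leg1, h_leg2, h_comm]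

theorem lTensor_mul_left (hD : D ∈ twistedBider inR inL inL inR) (b b' : A) (t : A ⊗[F] A) :
    (D (b * b')).lTensor A t = leg3 b * (D b').lTensor A t + (D b).lTensor A t * leg2 b' := by
  induction t with
  | zero => simp
  | add s t hs ht => simp only [map_add, mul_add, add_mul, hs, ht]; abel
  | tmul x y =>
    have h_leibniz : D (b * b') y = inR b * D b' y + D b y * inL b' := hD.1 y b b'
    simp [h_leibniz, TensorProduct.tmul_add]

theorem doubleJacobiator_mul_right (hD : D ∈ twistedBider inR inL inL inR) (a b b' c : A) :
    doubleJacobiator D c a (b * b') =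
      leg3 b * doubleJacobiator D c a b' + doubleJacobiator D c a b * leg2 b' := by
  have h_leibniz : D (b * b') c = inR b * D b' c + D b c * inL b' := hD.1 c b b'
  have h_extL (s t) := extL_mem_twistedDer (hD.2 a) s t
  have h_extLc (s t) := extLc_mem_twistedDer (hD.1 c) s t
  have h_one_left : D 1 c = 0 := map_one_of_mem_twistedDer (hD.1 c)
  have h_one_right : D a 1 = 0 := map_one_of_mem_twistedDer (hD.2 a)
  simp only [doubleJacobiator_apply, h_leibniz, hD.2 a b b', map_add, lTensor_mul_left hD, h_extL,
    h_extLc, Algebra.TensorProduct.includeLeft_apply, Algebra.TensorProduct.includeRight_apply,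
    extL_tmul, extLc_tmul, h_one_left, h_one_right, AlgHom.comp_apply, swap_tmul, legs12_tmul,
    legs13_tmul, legs23_apply, leg2_apply, leg3_apply, map_zero, mul_zero, zero_mul, mul_sub,
    sub_mul, ← Algebra.TensorProduct.one_def, mul_one]
  abel

theorem doubleJacobiator_mul_left (hD : D ∈ twistedBider inR inL inL inR) (a a' b c : A) :
    doubleJacobiator D c (a * a') b =
      leg2 a * doubleJacobiator D c a' b + doubleJacobiator D c a b * leg1 a' -
        legs23 (skewDefect D b a) * legs13 (D a' c) := by
  have h_leibniz (x) : D (a * a') x = inR a * D a' x + D a x * inL a' := hD.1 x a a'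
  have h_lTensor (s t) := lTensor_mem_twistedDer (hD.2 b) s t
  have h_extLc (s t) := extLc_mem_twistedDer (hD.1 c) s t
  have h_one_left : D 1 c = 0 := map_one_of_mem_twistedDer (hD.1 c)
  have h_one_right : D b 1 = 0 := map_one_of_mem_twistedDer (hD.2 b)
  simp only [doubleJacobiator_apply, skewDefect_apply, h_leibniz, map_add, extL_mul_left hD,
    h_lTensor, h_extLc, Algebra.TensorProduct.includeLeft_apply,
    Algebra.TensorProduct.includeRight_apply, LinearMap.lTensor_tmul, extLc_tmul, h_one_left,
    h_one_right, AlgHom.comp_apply, swap_tmul, legs12_tmul, legs13_tmul, legs23_apply, leg1_apply,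
    leg2_apply, map_zero, mul_zero, zero_mul, mul_sub, sub_mul, add_mul,
    ← Algebra.TensorProduct.one_def, mul_one, TensorProduct.tmul_zero]
  abel

end Jacobiator

section Correction

variable {F A : Type*} [Field F] [Ring A] [Algebra F A] {D : A →ₗ[F] A →ₗ[F] A ⊗[F] A}

/-- The inner double bracket `⟦a, b⟧ = a ⊗ b + b ⊗ a - ba ⊗ 1 - 1 ⊗ ab`, the twisted commutator of
`1 ⊗ 1` with `a` and then with `b`. -/
noncomputable def innerBracket : A →ₗ[F] A →ₗ[F] A ⊗[F] A :=
  twistedAd inL inR ∘ₗ twistedAd inR inL 1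

/-- The double bracket `⟦a, c⟧ = (1 ⊗ a) δ(c) - δ(c) (a ⊗ 1)` attached to a derivation `δ` into the
outer bimodule `A ⊗ A`; its values are killed by multiplication. -/
noncomputable def derBracket (δ : A →ₗ[F] A ⊗[F] A) : A →ₗ[F] A →ₗ[F] A ⊗[F] A :=
  (twistedAd inR inL ∘ₗ δ).flip

/-- The double Jacobiator, polarized in the two occurrences of the double bracket: `D` is the outer
and `E` the inner one. -/
noncomputable def mixedJacobiator (D E : A →ₗ[F] A →ₗ[F] A ⊗[F] A) (a b c : A) :
    A ⊗[F] (A ⊗[F] A) :=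
  extL D a (E b c) - (D b).lTensor A (E a c) - extLc D c (E a b)

theorem innerBracket_apply (a b : A) : innerBracket a b =
    a ⊗ₜ[F] b + b ⊗ₜ a - (b * a) ⊗ₜ 1 - 1 ⊗ₜ (a * b) := by
  simp only [innerBracket, LinearMap.comp_apply, twistedAd_apply, mul_one, one_mul, mul_sub,
    sub_mul, Algebra.TensorProduct.includeLeft_apply, Algebra.TensorProduct.includeRight_apply,
    Algebra.TensorProduct.tmul_mul_tmul]
  abel

theorem innerBracket_mem_twistedBider :
    (innerBracket : A →ₗ[F] A →ₗ[F] A ⊗[F] A) ∈ twistedBider inR inL inL inR :=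
  flip_mem_twistedBider <| twistedAd_comp_flip_mem_twistedBider (twistedAd_mem_twistedDer _ _ 1)
    (fun a b => by simp [Commute, SemiconjBy]) (fun a b => by simp [Commute, SemiconjBy])

theorem mul₃_extLc_innerBracket (hD : D ∈ twistedBider inR inL inL inR) (a b c : A) :
    mul₃ (extLc D c (innerBracket b a)) = 0 := by
  have h_mul_one : mul₃ (extLc D c ((a * b) ⊗ₜ 1)) = bracket D (a * b) c := by
    rw [mul₃_extLc_tmul, map_one, mul_one]
    rfl
  have h_one_mul : mul₃ (extLc D c (1 ⊗ₜ (b * a))) = 0 := by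
    have h_one : D 1 c = 0 := map_one_of_mem_twistedDer (hD.1 c)
    rw [mul₃_extLc_tmul, h_one, zero_mul, map_zero]
  simp only [innerBracket_apply, map_sub, map_add, h_mul_one, h_one_mul, bracket_mul_left hD]
  abel

theorem bracket_jacobi_of_mul₃_doubleJacobiator_eq_zero {k : F} {c : A}
    (hD : D ∈ twistedBider inR inL inL inR) (hskew : skewDefect D = k • innerBracket)
    (hJ : ∀ a b, mul₃ (doubleJacobiator D c a b) = 0) (a b : A) :
    bracket D a (bracket D b c) - bracket D b (bracket D a c) = bracket D (bracket D a b) c := by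
  rw [← sub_eq_zero, bracket_jacobi_defect hD, hJ, hJ, hskew, LinearMap.smul_apply,
    LinearMap.smul_apply, map_smul, map_smul, mul₃_extLc_innerBracket hD]
  simp

theorem twistedAd_legs13_mul_left {c : A} (hD : D.flip c ∈ twistedDer inR inL) (a a' b : A) :
    twistedAd leg3 leg2 (legs13 (D (a * a') c)) b =
      leg2 a * twistedAd leg3 leg2 (legs13 (D a' c)) b
        + twistedAd leg3 leg2 (legs13 (D a c)) b * leg1 a'
        - legs23 (innerBracket b a) * legs13 (D a' c) := by
  have h_leibniz : D (a * a') c = inR a * D a' c + D a c * inL a' := hD a a'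
  have h_inner : legs23 (innerBracket b a) =
      leg2 b * leg3 a + leg2 a * leg3 b - leg2 a * leg2 b - (leg3 b * leg3 a :
        A ⊗[F] (A ⊗[F] A)) := by
    simp [innerBracket_apply, TensorProduct.tmul_sub, TensorProduct.tmul_add]
  have h_leg3 : legs13 (inR a) = (leg3 a : A ⊗[F] (A ⊗[F] A)) := rfl
  have h_leg1 : legs13 (inL a') = (leg1 a' : A ⊗[F] (A ⊗[F] A)) := rfl
  have h12 : leg1 a' * leg2 b = (leg2 b * leg1 a' : A ⊗[F] (A ⊗[F] A)) := by simp
  have h23 : leg2 b * leg3 a = (leg3 a * leg2 b : A ⊗[F] (A ⊗[F] A)) := by simp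
  simp only [h_leibniz, map_add, LinearMap.add_apply, twistedAd_apply, map_mul, h_inner, h_leg3,
    h_leg1, h12, h23, mul_sub, sub_mul, add_mul, mul_assoc, (commute_legs13_leg2 (D a' c) b).eq]
  abel

theorem doubleJacobiator_add_mem_twistedBider {k : F} (hD : D ∈ twistedBider inR inL inL inR)
    (hskew : skewDefect D = k • innerBracket) (c : A) :
    doubleJacobiator D c + (-k) • (twistedAd leg3 leg2 ∘ₗ legs13.toLinearMap ∘ₗ D.flip c) ∈
      twistedBider leg2 leg1 leg3 leg2 := by
  have h_left (a a' b : A) : doubleJacobiator D c (a * a') b =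
      leg2 a * doubleJacobiator D c a' b + doubleJacobiator D c a b * leg1 a' -
        k • (legs23 (innerBracket b a) * legs13 (D a' c)) := by
    rw [doubleJacobiator_mul_left hD, hskew, LinearMap.smul_apply, LinearMap.smul_apply,
      map_smul legs23 k, smul_mul_assoc]
  exact add_neg_smul_mem_twistedBider h_left (doubleJacobiator_mul_right hD · · · c)
    (twistedAd_legs13_mul_left (hD.1 c)) (fun a => twistedAd_mem_twistedDer _ _ _)

variable {δ : A →ₗ[F] A ⊗[F] A}

theorem derBracket_apply (a c : A) : derBracket δ a c = inR a * δ c - δ c * inL a := by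
  rw [derBracket, LinearMap.flip_apply, LinearMap.comp_apply, twistedAd_apply]

theorem derBracket_of_eq_inL {c : A} (hc : δ c = inL c) (a : A) :
    derBracket δ a c = c ⊗ₜ a - (c * a) ⊗ₜ 1 := by
  simp [derBracket_apply, hc]

theorem derBracket_mem_twistedBider (hδ : δ ∈ twistedDer inL inR) :
    derBracket δ ∈ twistedBider inR inL inL inR :=
  twistedAd_comp_flip_mem_twistedBider hδ (fun a b => by simp [Commute, SemiconjBy])
    (fun a b => by simp [Commute, SemiconjBy])

theorem bracket_add_smul_derBracket (D : A →ₗ[F] A →ₗ[F] A ⊗[F] A) (k : F) :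
    bracket (D + k • derBracket δ) = bracket D := by
  ext a c
  simp [bracket, derBracket_apply, mul'_inR_mul, -Algebra.TensorProduct.includeRight_apply,
    -Algebra.TensorProduct.includeLeft_apply]

theorem extL_derBracket (a : A) (t : A ⊗[F] A) : extL (derBracket δ) a t =
    twistedAd leg2 leg1 (TensorProduct.assoc F A A A (δ.rTensor A t)) a := by
  induction t with
  | zero => simp
  | add s t hs ht => simp only [map_add, LinearMap.add_apply, hs, ht]
  | tmul x y =>
    have h_leg1 : legs12 (inL a) = (leg1 a : A ⊗[F] (A ⊗[F] A)) := rfl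
    have h_leg2 : legs12 (inR a) = (leg2 a : A ⊗[F] (A ⊗[F] A)) := rfl
    have h_comm : leg1 a * leg3 y = leg3 y * (leg1 a : A ⊗[F] (A ⊗[F] A)) := by simp
    rw [extL_tmul, LinearMap.rTensor_tmul, assoc_tmul_eq, twistedAd_apply, derBracket_apply,
      map_sub, map_mul, map_mul, h_leg1, h_leg2, sub_mul, mul_assoc, mul_assoc, mul_assoc, h_comm]

theorem lTensor_derBracket (b : A) (t : A ⊗[F] A) :
    (derBracket δ b).lTensor A t = twistedAd leg3 leg2 (δ.lTensor A t) b := by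
  induction t with
  | zero => simp
  | add s t hs ht => simp only [map_add, LinearMap.add_apply, hs, ht]
  | tmul x y => simp [derBracket_apply, TensorProduct.tmul_sub]

theorem extLc_derBracket {c : A} (hc : δ c = inL c) (t : A ⊗[F] A) :
    extLc (derBracket δ) c t = leg1 c * (legs23 (swap t) - legs12 t) := by
  induction t with
  | zero => simp
  | add s t hs ht =>
    simp only [map_add, mul_add, mul_sub, hs, ht]
    abel
  | tmul x y => simp [extLc_tmul, derBracket_of_eq_inL hc, sub_mul, mul_sub]

theorem mixedJacobiator_add_smul_left (D D' E : A →ₗ[F] A →ₗ[F] A ⊗[F] A) (k : F) (a b c : A) :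
    mixedJacobiator (D + k • D') E a b c =
      mixedJacobiator D E a b c + k • mixedJacobiator D' E a b c := by
  have h_flip : (D + k • D').flip c = D.flip c + k • D'.flip c := rfl
  simp only [mixedJacobiator, extL, extLc, h_flip, LinearMap.add_apply, LinearMap.smul_apply,
    LinearMap.rTensor_add, LinearMap.rTensor_smul, LinearMap.lTensor_add, LinearMap.lTensor_smul,
    LinearMap.comp_apply, map_add, map_smul]
  module

theorem mixedJacobiator_add_smul_right (D E E' : A →ₗ[F] A →ₗ[F] A ⊗[F] A) (k : F) (a b c : A) :
    mixedJacobiator D (E + k • E') a b c =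
      mixedJacobiator D E a b c + k • mixedJacobiator D E' a b c := by
  simp only [mixedJacobiator, LinearMap.add_apply, LinearMap.smul_apply, map_add, map_smul]
  module

theorem doubleJacobiator_add_smul (D E : A →ₗ[F] A →ₗ[F] A ⊗[F] A) (k : F) (a b c : A) :
    doubleJacobiator (D + k • E) c a b = doubleJacobiator D c a b +
      k • (mixedJacobiator D E a b c + mixedJacobiator E (D + k • E) a b c) := by
  rw [smul_add, ← add_assoc]
  exact (mixedJacobiator_add_smul_left ..).trans
    (congrArg (· + _) (mixedJacobiator_add_smul_right ..))

theorem mixedJacobiator_derBracket_left (E : A →ₗ[F] A →ₗ[F] A ⊗[F] A) {c : A} (hc : δ c = inL c)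
    (a b : A) : mixedJacobiator (derBracket δ) E a b c =
      twistedAd leg2 leg1 (TensorProduct.assoc F A A A (δ.rTensor A (E b c))) a
        - twistedAd leg3 leg2 (δ.lTensor A (E a c)) b
        - leg1 c * (legs23 (swap (E a b)) - legs12 (E a b)) := by
  rw [mixedJacobiator, extL_derBracket, lTensor_derBracket, extLc_derBracket hc]

theorem mixedJacobiator_derBracket_right (hD : D ∈ twistedBider inR inL inL inR) {b c : A}
    (hb : δ b = inL b) (hc : δ c = inL c) (a : A) : mixedJacobiator D (derBracket δ) a b c =
      twistedAd leg3 leg2 (legs12 (D a c)) b - twistedAd leg2 leg1 (legs13 (D b c)) a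
        - leg1 c * (legs12 (D a b) + legs23 (D b a)) + leg3 b * legs13 (D a c) := by
  have h_right : D a (c * b) = inL c * D a b + D a c * inR b := hD.2 a c b
  have h_left : D (b * a) c = inR b * D a c + D b c * inL a := hD.1 c b a
  have h_one : D b 1 = 0 := map_one_of_mem_twistedDer (hD.2 b)
  have h_leg1 (x : A) : legs12 (inL x) = (leg1 x : A ⊗[F] (A ⊗[F] A)) := rfl
  have h_leg2 (x : A) : legs12 (inR x) = (leg2 x : A ⊗[F] (A ⊗[F] A)) := rfl
  have h_leg1' (x : A) : legs13 (inL x) = (leg1 x : A ⊗[F] (A ⊗[F] A)) := rfl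
  have h_leg3 (x : A) : legs13 (inR x) = (leg3 x : A ⊗[F] (A ⊗[F] A)) := rfl
  simp only [mixedJacobiator, derBracket_of_eq_inL hb, derBracket_of_eq_inL hc, map_sub, extL_tmul,
    extLc_tmul, lTensor_tmul_eq, h_right, h_left, h_one, map_add, map_mul, h_leg1, h_leg2, h_leg1',
    h_leg3, map_one, map_zero, mul_one, mul_zero, twistedAd_apply, mul_add,
    (commute_legs12_leg3 (D a c) b).eq, (commute_legs13_leg2 (D b c) a).eq]
  abel

theorem legs_add_smul_of_skewDefect_eq {k : F} {a b : A} {w : A ⊗[F] A}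
    (hskew : skewDefect D b a = k • w) (E : A →ₗ[F] A →ₗ[F] A ⊗[F] A) :
    legs12 (D a b) + legs23 (D b a)
        + (legs23 (swap ((D + k • E) a b)) - legs12 ((D + k • E) a b)) =
      k • (legs23 w + legs23 (swap (E a b)) - legs12 (E a b)) := by
  have h_swap : legs23 (D b a) = k • legs23 w - legs23 (swap (D a b)) := by
    rw [← map_smul, ← map_sub, ← hskew, skewDefect_apply, add_sub_cancel_right]
  simp only [h_swap, LinearMap.add_apply, LinearMap.smul_apply, map_add, map_smul]
  module

theorem leg1_mul_derBracket {b c : A} (hb : δ b = inL b) (hc : δ c = inL c) (a : A) :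
    leg1 c * (legs23 (b ⊗ₜ a - a ⊗ₜ b) + legs23 (swap (derBracket δ a b))
        - legs12 (derBracket δ a b)) =
      - (twistedAd leg3 leg2 (legs13 (derBracket δ a c)) b
        + twistedAd leg2 leg1 (leg1 (R := F) (c * b)) a
        + twistedAd leg3 leg2 (leg1 (R := F) (c * a)) b) := by
  simp only [derBracket_of_eq_inL hb, derBracket_of_eq_inL hc, map_sub, twistedAd_apply, mul_sub,
    mul_add, swap_tmul, legs12_tmul, legs13_tmul, legs23_apply, leg1_apply, leg2_apply,
    leg3_apply, Algebra.TensorProduct.tmul_mul_tmul, mul_one, one_mul, mul_assoc,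
    LinearMap.sub_apply]
  abel

set_option maxHeartbeats 400000 in
-- Instance unification in the iterated tensor product `A ⊗ (A ⊗ A)` is slow.
theorem doubleJacobiator_add_smul_derBracket {k : F} {a b c : A}
    (hD : D ∈ twistedBider inR inL inL inR) (hb : δ b = inL b) (hc : δ c = inL c)
    (hskew : skewDefect D b a = k • (b ⊗ₜ a - a ⊗ₜ b))
    (hJ : doubleJacobiator D c a b = -k • (legs13 (D a c) * leg2 b)) :
    doubleJacobiator (D + k • derBracket δ) c a b =
      k • twistedAd leg3 leg2 (legs13 ((D + k • derBracket δ) a c)) b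
        + (twistedAd leg2 leg1 (k • (TensorProduct.assoc F A A A
              (δ.rTensor A ((D + k • derBracket δ) b c)) - legs13 (D b c)
                + k • leg1 (R := F) (c * b))) a
          + twistedAd leg3 leg2 (k • (legs12 (D a c) + k • leg1 (R := F) (c * a)
              - δ.lTensor A ((D + k • derBracket δ) a c))) b) := by
  have h_legs := congrArg (leg1 c * ·) (legs_add_smul_of_skewDefect_eq hskew (derBracket δ))
  rw [mul_add, mul_smul_comm, leg1_mul_derBracket hb hc] at h_legs
  have h_shift : legs13 ((D + k • derBracket δ) a c) =
      legs13 (D a c) + k • legs13 (derBracket δ a c) := by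
    rw [LinearMap.add_apply, LinearMap.add_apply, map_add, LinearMap.smul_apply,
      LinearMap.smul_apply, map_smul]
  rw [doubleJacobiator_add_smul, hJ, mixedJacobiator_derBracket_right hD hb hc,
    mixedJacobiator_derBracket_left _ hc, h_shift]
  simp only [map_add (twistedAd _ _), map_sub (twistedAd _ _), map_smul (twistedAd _ _),
    LinearMap.add_apply (_ : A →ₗ[F] A ⊗[F] (A ⊗[F] A)),
    LinearMap.sub_apply (_ : A →ₗ[F] A ⊗[F] (A ⊗[F] A)),
    LinearMap.smul_apply _ (_ : A →ₗ[F] A ⊗[F] (A ⊗[F] A)),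
    twistedAd_apply _ _ (legs13 (D a c))]
  linear_combination (norm := module) (-k) • h_legs

end Correction

section FreeDoubleBracket

variable {F X : Type*} [Field F] {k : F}
  {D : FreeAlgebra F X →ₗ[F] FreeAlgebra F X →ₗ[F] FreeAlgebra F X ⊗[F] FreeAlgebra F X}
  {δ : FreeAlgebra F X →ₗ[F] FreeAlgebra F X ⊗[F] FreeAlgebra F X}

theorem skewDefect_add_smul_derBracket (hD : D ∈ twistedBider inR inL inL inR)
    (hδ : δ ∈ twistedDer inL inR) (hδι : ∀ x, δ (FreeAlgebra.ι F x) = inL (FreeAlgebra.ι F x))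
    (hskew : ∀ x y, skewDefect D (FreeAlgebra.ι F x) (FreeAlgebra.ι F y) =
      k • (FreeAlgebra.ι F x ⊗ₜ FreeAlgebra.ι F y - FreeAlgebra.ι F y ⊗ₜ FreeAlgebra.ι F x)) :
    skewDefect (D + k • derBracket δ) = k • innerBracket := by
  have h_shift := add_mem hD (Submodule.smul_mem _ k (derBracket_mem_twistedBider hδ))
  refine twistedBider_freeAlgebra_ext (skewDefect_mem_twistedBider h_shift)
    (Submodule.smul_mem _ k innerBracket_mem_twistedBider) fun x y => ?_
  have h_add (a b) : skewDefect (D + k • derBracket δ) a b =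
      skewDefect D a b + k • skewDefect (derBracket δ) a b := by
    simp only [skewDefect_apply, LinearMap.add_apply, LinearMap.smul_apply, map_add, map_smul]
    module
  simp only [h_add, hskew, skewDefect_apply, derBracket_of_eq_inL (hδι _), map_sub, swap_tmul,
    LinearMap.smul_apply, innerBracket_apply]
  module

theorem mul₃_doubleJacobiator_eq_zero_of_generators (hD : D ∈ twistedBider inR inL inL inR)
    (hskew : skewDefect D = k • innerBracket) (c : FreeAlgebra F X)
    (p q : X → FreeAlgebra F X ⊗[F] (FreeAlgebra F X ⊗[F] FreeAlgebra F X))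
    (hJ : ∀ x y, doubleJacobiator D c (FreeAlgebra.ι F x) (FreeAlgebra.ι F y) =
      k • twistedAd leg3 leg2 (legs13 (D (FreeAlgebra.ι F x) c)) (FreeAlgebra.ι F y)
        + (twistedAd leg2 leg1 (p y) (FreeAlgebra.ι F x)
          + twistedAd leg3 leg2 (q x) (FreeAlgebra.ι F y))) (a b : FreeAlgebra F X) :
    mul₃ (doubleJacobiator D c a b) = 0 := by
  have h_generators (x y) : (doubleJacobiator D c
      + (-k) • (twistedAd leg3 leg2 ∘ₗ legs13.toLinearMap ∘ₗ D.flip c))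
        (FreeAlgebra.ι F x) (FreeAlgebra.ι F y) =
      twistedAd leg2 leg1 (p y) (FreeAlgebra.ι F x)
        + twistedAd leg3 leg2 (q x) (FreeAlgebra.ι F y) := by
    rw [LinearMap.add_apply, LinearMap.add_apply, hJ, LinearMap.smul_apply, LinearMap.smul_apply,
      neg_smul]
    exact add_neg_cancel_comm _ _
  obtain ⟨s, t, h_eq⟩ := exists_eq_twistedAd_add_twistedAd
    (doubleJacobiator_add_mem_twistedBider hD hskew c)
    (fun a b => by simp [Commute, SemiconjBy]) (fun a b => by simp [Commute, SemiconjBy])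
    p q h_generators a b
  have h_mul := congrArg mul₃ h_eq
  rw [map_add, mul₃_twistedAd_leg2_leg1, mul₃_twistedAd_leg3_leg2, LinearMap.add_apply,
    LinearMap.add_apply, map_add, LinearMap.smul_apply, LinearMap.smul_apply, map_smul,
    LinearMap.comp_apply, mul₃_twistedAd_leg3_leg2, smul_zero, add_zero, add_zero] at h_mul
  exact h_mul

theorem bracket_jacobi_generator (hD : D ∈ twistedBider inR inL inL inR)
    (hskew : ∀ x y, skewDefect D (FreeAlgebra.ι F x) (FreeAlgebra.ι F y) =
      k • (FreeAlgebra.ι F x ⊗ₜ FreeAlgebra.ι F y - FreeAlgebra.ι F y ⊗ₜ FreeAlgebra.ι F x))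
    (hJ : ∀ x y z,
      doubleJacobiator D (FreeAlgebra.ι F z) (FreeAlgebra.ι F x) (FreeAlgebra.ι F y) =
        -k • (legs13 (D (FreeAlgebra.ι F x) (FreeAlgebra.ι F z)) * leg2 (FreeAlgebra.ι F y)))
    (a b : FreeAlgebra F X) (z : X) :
    bracket D a (bracket D b (FreeAlgebra.ι F z)) - bracket D b (bracket D a (FreeAlgebra.ι F z)) =
      bracket D (bracket D a b) (FreeAlgebra.ι F z) := by
  obtain ⟨δ, hδ, hδι⟩ := exists_mem_twistedDer_freeAlgebra inL inR
    fun x => inL (R := F) (FreeAlgebra.ι F x)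
  have h_shift := add_mem hD (Submodule.smul_mem _ k (derBracket_mem_twistedBider hδ))
  have h_skew := skewDefect_add_smul_derBracket hD hδ hδι hskew
  have h_mul₃ := mul₃_doubleJacobiator_eq_zero_of_generators h_shift h_skew _ _ _ fun x y =>
    doubleJacobiator_add_smul_derBracket hD (hδι y) (hδι z) (hskew y x) (hJ x y z)
  simpa only [bracket_add_smul_derBracket] using
    bracket_jacobi_of_mul₃_doubleJacobiator_eq_zero h_shift h_skew h_mul₃ a b

theorem bracket_jacobi_of_generators (hD : D ∈ twistedBider inR inL inL inR)
    (h : ∀ a b x, bracket D a (bracket D b (FreeAlgebra.ι F x))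
        - bracket D b (bracket D a (FreeAlgebra.ι F x)) =
      bracket D (bracket D a b) (FreeAlgebra.ι F x)) (a b c : FreeAlgebra F X) :
    bracket D a (bracket D b c) - bracket D b (bracket D a c) = bracket D (bracket D a b) c :=
  LinearMap.congr_fun (twistedDer_freeAlgebra_ext
    (commutator_mem_twistedDer_id (bracket_mem_twistedDer_id hD a) (bracket_mem_twistedDer_id hD b))
    (bracket_mem_twistedDer_id hD (bracket D a b)) (h a b)) c

end FreeDoubleBracket

theorem extended_bracket_leibniz_jacobi_general {F X : Type*} [Field F] (lam : F)
    (D : FreeAlgebra F X →ₗ[F] FreeAlgebra F X →ₗ[F] (FreeAlgebra F X ⊗[F] FreeAlgebra F X))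
    (hac : ∀ x y : X,
      D (FreeAlgebra.ι F x) (FreeAlgebra.ι F y) +
        (TensorProduct.comm F _ _) (D (FreeAlgebra.ι F y) (FreeAlgebra.ι F x)) =
      lam • ((FreeAlgebra.ι F x) ⊗ₜ[F] (FreeAlgebra.ι F y)
        - (FreeAlgebra.ι F y) ⊗ₜ[F] (FreeAlgebra.ι F x)))
    (hJac : ∀ x y z : X,
      extL D (FreeAlgebra.ι F x) (D (FreeAlgebra.ι F y) (FreeAlgebra.ι F z))
        - swap12 F (FreeAlgebra F X)
            (extR D (FreeAlgebra.ι F y) (D (FreeAlgebra.ι F x) (FreeAlgebra.ι F z)))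
        - extLc D (FreeAlgebra.ι F z) (D (FreeAlgebra.ι F x) (FreeAlgebra.ι F y))
      = -lam • swap12 F (FreeAlgebra F X)
          ((FreeAlgebra.ι F y) ⊗ₜ[F] (D (FreeAlgebra.ι F x) (FreeAlgebra.ι F z))))
    (hLeibR : ∀ a b c : FreeAlgebra F X,
      D a (b * c) = (b ⊗ₜ[F] (1 : FreeAlgebra F X)) * D a c
        + D a b * ((1 : FreeAlgebra F X) ⊗ₜ[F] c))
    (hLeibL : ∀ a b c : FreeAlgebra F X,
      D (a * b) c = ((1 : FreeAlgebra F X) ⊗ₜ[F] a) * D b c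
        + D a c * (b ⊗ₜ[F] (1 : FreeAlgebra F X)))
    (a b c : FreeAlgebra F X) :
    LinearMap.mul' F (FreeAlgebra F X) (D a (LinearMap.mul' F (FreeAlgebra F X) (D b c)))
      - LinearMap.mul' F (FreeAlgebra F X) (D b (LinearMap.mul' F (FreeAlgebra F X) (D a c)))
      = LinearMap.mul' F (FreeAlgebra F X) (D (LinearMap.mul' F (FreeAlgebra F X) (D a b)) c) := by
  have hD : D ∈ twistedBider inR inL inL inR := ⟨fun c a b => hLeibL a b c, hLeibR⟩
  have hJ (x y z) : doubleJacobiator D (FreeAlgebra.ι F z) (FreeAlgebra.ι F x) (FreeAlgebra.ι F y) =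
      -lam •
        (legs13 (D (FreeAlgebra.ι F x) (FreeAlgebra.ι F z)) * leg2 (FreeAlgebra.ι F y)) := by
    rw [doubleJacobiator_apply, ← swap12_extR, hJac, swap12_tmul_eq]
  exact bracket_jacobi_of_generators hD (bracket_jacobi_generator hD hac hJ) a b c

/-- Let `(V,⟦·,·⟧)` be a finite-dimensional `λ`-double Lie algebra, `λ ≠ 0`,
with basis `e₁,…,eₙ`, and let `D` be its extension to the free associative
algebra `A = F⟨e₁,…,eₙ⟩` via the Leibniz rules. Then `{a,b} := μ(⟦a,b⟧)`
satisfies `{a,{b,c}} - {b,{a,c}} = {{a,b},c}` for all `a,b,c ∈ A`. -/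
theorem extended_bracket_leibniz_jacobi
    {F : Type*} [Field F] {n : ℕ} (lam : F) (hlam : lam ≠ 0)
    (D : FreeAlgebra F (Fin n) →ₗ[F] FreeAlgebra F (Fin n) →ₗ[F]
      (FreeAlgebra F (Fin n) ⊗[F] FreeAlgebra F (Fin n)))
    (hVV : ∀ i j : Fin n, D (FreeAlgebra.ι F i) (FreeAlgebra.ι F j) ∈
      Submodule.span F {x : FreeAlgebra F (Fin n) ⊗[F] FreeAlgebra F (Fin n) |
        ∃ k l : Fin n, x = (FreeAlgebra.ι F k) ⊗ₜ[F] (FreeAlgebra.ι F l)})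
    (hac : ∀ i j : Fin n,
      D (FreeAlgebra.ι F i) (FreeAlgebra.ι F j) +
        (TensorProduct.comm F _ _) (D (FreeAlgebra.ι F j) (FreeAlgebra.ι F i)) =
      lam • ((FreeAlgebra.ι F i) ⊗ₜ[F] (FreeAlgebra.ι F j)
        - (FreeAlgebra.ι F j) ⊗ₜ[F] (FreeAlgebra.ι F i)))
    (hJac : ∀ i j k : Fin n,
      extL D (FreeAlgebra.ι F i) (D (FreeAlgebra.ι F j) (FreeAlgebra.ι F k))
        - swap12 F (FreeAlgebra F (Fin n))
            (extR D (FreeAlgebra.ι F j) (D (FreeAlgebra.ι F i) (FreeAlgebra.ι F k)))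
        - extLc D (FreeAlgebra.ι F k) (D (FreeAlgebra.ι F i) (FreeAlgebra.ι F j))
      = -lam • swap12 F (FreeAlgebra F (Fin n))
          ((FreeAlgebra.ι F j) ⊗ₜ[F] (D (FreeAlgebra.ι F i) (FreeAlgebra.ι F k))))
    (hLeibR : ∀ a b c : FreeAlgebra F (Fin n),
      D a (b * c) = (b ⊗ₜ[F] (1 : FreeAlgebra F (Fin n))) * D a c
        + D a b * ((1 : FreeAlgebra F (Fin n)) ⊗ₜ[F] c))
    (hLeibL : ∀ a b c : FreeAlgebra F (Fin n),
      D (a * b) c = ((1 : FreeAlgebra F (Fin n)) ⊗ₜ[F] a) * D b c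
        + D a c * (b ⊗ₜ[F] (1 : FreeAlgebra F (Fin n)))) :
    ∀ a b c : FreeAlgebra F (Fin n),
      LinearMap.mul' F (FreeAlgebra F (Fin n))
          (D a (LinearMap.mul' F (FreeAlgebra F (Fin n)) (D b c)))
        - LinearMap.mul' F (FreeAlgebra F (Fin n))
            (D b (LinearMap.mul' F (FreeAlgebra F (Fin n)) (D a c)))
        = LinearMap.mul' F (FreeAlgebra F (Fin n))
            (D (LinearMap.mul' F (FreeAlgebra F (Fin n)) (D a b)) c) :=
  extended_bracket_leibniz_jacobi_general lam D hac hJac hLeibR hLeibL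
end
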